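/- Let q be a prime power, m ≥ 1, s ≥ 1, and let F ∈ F_q[X_1,...,X_m] have total degree at most d with d < sq. If H(F, i)(P) = 0 for every point P ∈ F_q^m and every multi-index i ∈ ℕ^m with |i| < s, then F = 0. Equivalently, the evaluation map ev^s : F ↦ ((H(F,i)(P))_{|i|<s})_{P ∈ F_q^m} is injective on polynomials of total degree at most d. -/

import Mathlib

/-!
Write `g l = ∏ r : K, (X l - r)`, the polynomial vanishing on `K` in the variable `X l`. The proof
expands `F` in powers of the `g l`: for every `k ≤ s` there is an expression
`F = ∑_{|e| = k} h_e g^e` with `deg h_e + k q ≤ d` whenever `h_e ≠ 0`. For `k = s` the bound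
`d < s q` leaves no room for a nonzero `h_e`, hence `F = 0`.

For `k = 0` one takes `h_0 = F`. To pass from `k < s` to `k + 1`, translate a point `P` to the
origin: `g l` becomes `X l` times a polynomial with nonzero constant term, so for `|e| = k` the
coefficient of `Z^e` in `F(P + Z)` is a nonzero multiple of `h_e(P)`
(`eval_coeff_eq_zero`). That coefficient is the Hasse derivative `H(F, e)(P) = 0`, so each `h_e`
vanishes on all of `K^m`. Alon's combinatorial Nullstellensatz then writes
`h_e = ∑ l, c_{e,l} g l` without raising the degree (`exists_adapted_succ`).
-/

open MvPolynomial

/-- The `i`-th Hasse derivative of `F`: the coefficient of `Z^i` in `F(X+Z)`. -/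
noncomputable def hasseDerivM {K : Type} [CommRing K] {m : ℕ} (i : Fin m →₀ ℕ)
    (F : MvPolynomial (Fin m) K) : MvPolynomial (Fin m) K :=
  MvPolynomial.coeff i
    ((MvPolynomial.aeval
        (fun l => (MvPolynomial.C (MvPolynomial.X l) + MvPolynomial.X l :
          MvPolynomial (Fin m) (MvPolynomial (Fin m) K)))) F)

namespace HasseVanishing

variable {K : Type} [Field K] {m : ℕ}

/-- The product of `X l - r` over all `r : K`, that is `X l ^ q - X l` when `K` has `q` elements. -/
noncomputable def vanPoly (K : Type) [Field K] [Fintype K] {m : ℕ} (l : Fin m) :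
    MvPolynomial (Fin m) K :=
  ∏ r : K, (X l - C r)

/-- The substitution `F(X) ↦ F(P + X)`, which moves the point `P` to the origin. -/
noncomputable def translate (P : Fin m → K) :
    MvPolynomial (Fin m) K →ₐ[K] MvPolynomial (Fin m) K :=
  aeval fun l => C (P l) + X l

lemma eval_hasseDerivM (P : Fin m → K) (i : Fin m →₀ ℕ) (F : MvPolynomial (Fin m) K) :
    eval P (hasseDerivM i F) = coeff i (translate P F) := by
  rw [hasseDerivM, ← coeff_map]
  congr 1
  induction F using MvPolynomial.induction_on with
  | C a => simp [translate, MvPolynomial.algebraMap_apply]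
  | add p q hp hq => simp only [map_add, hp, hq]
  | mul_X p n hp => simp only [map_mul, hp]; simp [translate]

/-- At every rational point `vanPoly K l` has a simple zero in the direction `l`: after translation
it is `X l` times a polynomial invertible at the origin. -/
lemma translate_vanPoly [Fintype K] (P : Fin m → K) (l : Fin m) :
    ∃ u : MvPolynomial (Fin m) K, constantCoeff u ≠ 0 ∧
      translate P (vanPoly K l) = X l * u := by
  classical
  refine ⟨∏ r ∈ Finset.univ.erase (0 : K), (X l + C r), ?_, ?_⟩
  · rw [map_prod, Finset.prod_ne_zero_iff]
    intro r hr
    simpa using hr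
  · have h1 : translate P (vanPoly K l) = ∏ r : K, (X l + C r) := by
      rw [vanPoly, map_prod, ← (Equiv.subLeft (P l)).prod_comp]
      refine Finset.prod_congr rfl fun r _ => ?_
      simp [translate, MvPolynomial.algebraMap_eq]
    rw [h1, ← Finset.mul_prod_erase _ _ (Finset.mem_univ (0 : K))]
    simp

lemma totalDegree_X_sub_C (l : Fin m) (r : K) :
    (X l - C r : MvPolynomial (Fin m) K).totalDegree = 1 := by
  rw [sub_eq_add_neg, ← map_neg, totalDegree_add_eq_left_of_totalDegree_lt] <;> simp

lemma totalDegree_vanPoly [Fintype K] (l : Fin m) :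
    (vanPoly K l).totalDegree = Fintype.card K ∧ vanPoly K l ≠ 0 := by
  classical
  have key : ∀ s : Finset K, (∏ r ∈ s, (X l - C r) : MvPolynomial (Fin m) K) ≠ 0 ∧
      (∏ r ∈ s, (X l - C r) : MvPolynomial (Fin m) K).totalDegree = s.card := by
    intro s
    have hne (r : K) : (X l - C r : MvPolynomial (Fin m) K) ≠ 0 := by
      intro h
      simpa [h] using totalDegree_X_sub_C l r
    induction s using Finset.induction_on with
    | empty => simp
    | insert a s ha ih =>
      rw [Finset.prod_insert ha, Finset.card_insert_of_notMem ha]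
      refine ⟨mul_ne_zero (hne a) ih.1, ?_⟩
      rw [totalDegree_mul_of_isDomain (hne a) ih.1, ih.2, totalDegree_X_sub_C, add_comm]
  exact ⟨(key Finset.univ).2, (key Finset.univ).1⟩

lemma constantCoeff_translate (P : Fin m → K) (F : MvPolynomial (Fin m) K) :
    constantCoeff (translate P F) = eval P F := by
  induction F using MvPolynomial.induction_on with
  | C a => simp [translate, algebraMap_eq]
  | add p q hp hq => simp only [map_add, hp, hq]
  | mul_X p n hp => simp only [map_mul, hp]; simp [translate]

/-- `G = ∑ h_e Y^e`, with coefficients `h_e` in `K[X]`, is homogeneous of degree `k` in `Y`, and its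
nonzero coefficients satisfy `deg h_e + k q ≤ d`. Substituting `vanPoly K l`, of degree `q`, for
`Y l` then produces only terms of degree at most `d`. -/
def Adapted (q d k : ℕ) (G : MvPolynomial (Fin m) (MvPolynomial (Fin m) K)) : Prop :=
  ∀ e, coeff e G ≠ 0 → e.degree = k ∧ (coeff e G).totalDegree + k * q ≤ d

lemma Adapted.add {q d k : ℕ} {G H : MvPolynomial (Fin m) (MvPolynomial (Fin m) K)}
    (hG : Adapted q d k G) (hH : Adapted q d k H) : Adapted q d k (G + H) := by
  intro e he
  rw [coeff_add] at he ⊢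
  by_cases h1 : coeff e G = 0
  · rw [h1, zero_add] at he ⊢
    exact hH e he
  by_cases h2 : coeff e H = 0
  · rw [h2, add_zero] at he ⊢
    exact hG e he
  have := totalDegree_add (coeff e G) (coeff e H)
  have a := hG e h1
  have b := hH e h2
  refine ⟨a.1, ?_⟩
  rcases le_max_iff.1 this with h | h <;> omega

/-- If `G = ∑_{|e| = k} h_e Y^e` and `|e| = k`, the coefficient of `Z^e` in the translate by `P` of
`∑ h_e g^e` is a nonzero multiple of `h_e(P)`; so if it vanishes, `h_e(P) = 0`. -/
lemma eval_coeff_eq_zero [Fintype K] {q d k : ℕ} {G : MvPolynomial (Fin m) (MvPolynomial (Fin m) K)}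
    (hG : Adapted q d k G) (P : Fin m → K) (e : Fin m →₀ ℕ) (he : e.degree = k)
    (h : coeff e (translate P (eval (vanPoly K) G)) = 0) :
    eval P (coeff e G) = 0 := by
  classical
  choose u hu hgu using translate_vanPoly (K := K) P
  have hterm (a : Fin m →₀ ℕ) (A : MvPolynomial (Fin m) K) :
      translate P (A * ∏ i, vanPoly K i ^ a i) =
        monomial a 1 * (translate P A * ∏ i, u i ^ a i) := by
    rw [map_mul, map_prod]
    simp only [map_pow, hgu, mul_pow, Finset.prod_mul_distrib]
    rw [monomial_eq, Finsupp.prod_fintype _ _ (by simp)]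
    simp only [map_one, one_mul]
    ring
  rw [eval_eq', map_sum, coeff_sum] at h
  rw [Finset.sum_eq_single e] at h
  · rw [hterm, coeff_monomial_mul', if_pos le_rfl, tsub_self, one_mul, ← constantCoeff_eq,
      map_mul, constantCoeff_translate, map_prod] at h
    refine (mul_eq_zero.1 h).resolve_right (Finset.prod_ne_zero_iff.2 fun i _ => ?_)
    rw [map_pow]
    exact pow_ne_zero _ (hu i)
  · intro a ha hae
    -- The term at `a` is divisible by `Z^a`, which does not divide `Z^e` as `|a| = |e|`, `a ≠ e`.
    rw [hterm, coeff_monomial_mul', if_neg]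
    intro hle
    apply hae
    have h1 := (hG a (mem_support_iff.1 ha)).1
    have h2 : e - a + a = e := tsub_add_cancel_of_le hle
    have h3 : (e - a).degree = 0 := by
      have := congrArg Finsupp.degree h2
      rw [map_add] at this
      omega
    rw [Finsupp.degree_eq_zero_iff] at h3
    rw [← h2, h3, zero_add]
  · intro hn
    rw [notMem_support_iff.1 hn]
    simp

/-- If all coefficients of `G` vanish on `K^m`, the combinatorial Nullstellensatz expresses each of
them through the `vanPoly K l`, which trades `q` degrees in `X` for one more degree in `Y`. -/
lemma exists_adapted_succ [Fintype K] {q d k : ℕ} (hK : Fintype.card K = q)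
    {G : MvPolynomial (Fin m) (MvPolynomial (Fin m) K)}
    (hG : Adapted q d k G) (hv : ∀ e P, eval P (coeff e G) = 0) :
    ∃ G' : MvPolynomial (Fin m) (MvPolynomial (Fin m) K),
      Adapted q d (k + 1) G' ∧ eval (vanPoly K) G' = eval (vanPoly K) G := by
  classical
  have hN (e : Fin m →₀ ℕ) := combinatorial_nullstellensatz_exists_linearCombination
    (fun _ : Fin m => (Finset.univ : Finset K)) (fun _ => Finset.univ_nonempty) (coeff e G)
    (fun x _ => hv e x)
  choose c hdeg hc using hN
  refine ⟨∑ e ∈ G.support, ∑ i, monomial (e + Finsupp.single i 1) (c e i), ?_, ?_⟩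
  · have h0 : Adapted q d (k + 1) (0 : MvPolynomial (Fin m) (MvPolynomial (Fin m) K)) :=
      fun e he => absurd (coeff_zero e) he
    refine Finset.sum_induction _ _ (fun _ _ => Adapted.add) h0 fun e he => ?_
    refine Finset.sum_induction _ _ (fun _ _ => Adapted.add) h0 fun i _ => ?_
    intro a ha
    rw [coeff_monomial] at ha ⊢
    split_ifs at ha ⊢ with hea
    · obtain ⟨h1, h2⟩ := hG e (mem_support_iff.1 he)
      have h3 := hdeg e i
      change (vanPoly K i * c e i).totalDegree ≤ _ at h3
      rw [totalDegree_mul_of_isDomain (totalDegree_vanPoly i).2 ha, (totalDegree_vanPoly i).1,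
        hK] at h3
      refine ⟨by rw [← hea, map_add, h1]; simp, ?_⟩
      rw [add_mul]
      omega
    · exact absurd rfl ha
  · conv_rhs => rw [G.as_sum]
    simp only [map_sum]
    refine Finset.sum_congr rfl fun e _ => ?_
    conv_rhs => rw [hc e, Finsupp.linearCombination_apply, Finsupp.sum_fintype _ _ (by simp),
      map_sum, map_sum]
    refine Finset.sum_congr rfl fun i _ => ?_
    change _ = eval (vanPoly K) (monomial e (c e i • vanPoly K i))
    simp only [eval_monomial, smul_eq_mul]
    rw [Finsupp.prod_add_index' (by simp) (by simp [pow_add]), Finsupp.prod_single_index (by simp)]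
    ring

end HasseVanishing

open HasseVanishing in
/-- If `F` has total degree at most `d < sq` and all Hasse derivatives `H(F,i)` with
`|i| < s` vanish at every point of `F_q^m`, then `F = 0`; i.e. `ev^s` is injective
on polynomials of total degree at most `d`. -/
theorem stmt11 (q m s d : ℕ) (hq : IsPrimePow q) (hm : 1 ≤ m) (hs : 1 ≤ s)
    (hd : d < s * q)
    (K : Type) [Field K] [Fintype K] (hK : Fintype.card K = q)
    (F : MvPolynomial (Fin m) K) (hF : F.totalDegree ≤ d)
    (h : ∀ (P : Fin m → K) (i : Fin m →₀ ℕ), (∑ l, i l) < s →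
      MvPolynomial.eval P (hasseDerivM i F) = 0) :
    F = 0 := by
  classical
  have key : ∀ k ≤ s, ∃ G : MvPolynomial (Fin m) (MvPolynomial (Fin m) K),
      Adapted q d k G ∧ eval (vanPoly K) G = F := by
    intro k
    induction k with
    | zero =>
      refine fun _ => ⟨C F, fun e he => ?_, by simp⟩
      rw [coeff_C] at he ⊢
      split_ifs at he ⊢ with h0
      · subst h0
        simpa using hF
      · exact absurd rfl he
    | succ k ih =>
      intro hk
      obtain ⟨G, hG, hGF⟩ := ih (by omega)
      obtain ⟨G', hG', hE⟩ := exists_adapted_succ hK hG fun e P => by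
        by_cases hc : coeff e G = 0
        · rw [hc, map_zero]
        · have he := (hG e hc).1
          refine eval_coeff_eq_zero hG P e he ?_
          rw [hGF, ← eval_hasseDerivM]
          refine h P e ?_
          rw [← Finsupp.degree_eq_sum, he]
          omega
      exact ⟨G', hG', hE.trans hGF⟩
  obtain ⟨G, hG, hGF⟩ := key s le_rfl
  have hG0 : G = 0 := by
    ext1 e
    by_contra hne
    have := (hG e hne).2
    omega
  rw [← hGF, hG0, map_zero]
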